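/- arXiv:2106.16165 — 8 statements merged into one kernel-verified Lean document; each statement's English description precedes it below -/
import Mathlib

section
/- Basic existence lemma: let a, b be positive integers and c = a + b. The set 𝒯(a,b) is a subgroup of the group of derivations (under pointwise addition), it is saturated (if k·ψ ∈ 𝒯(a,b) for some nonzero integer k and some derivation ψ with ψ(p)=0 for all primes p not dividing abc, then ψ ∈ 𝒯(a,b)), and it has rank ω(abc) − 1: there exist ω(abc) − 1 ℤ-linearly independent elements of 𝒯(a,b), and any ω(abc) elements of 𝒯(a,b) are ℤ-linearly dependent. -/
open Finset

/-- The arithmetic derivative attached to `ψ`: `d^ψ(n) = Σ_{p ∣ n} (n·v_p(n)/p)·ψ(p)`,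
with `d^ψ(0) = 0` (empty sum). Each term is written as `(n/p)·v_p(n)·ψ(p)`, exact since `p ∣ n`. -/
def dpsi (ψ : ℕ → ℤ) (n : ℤ) : ℤ :=
  ∑ p ∈ n.natAbs.primeFactors, (n / (p : ℤ)) * (n.natAbs.factorization p : ℤ) * ψ p

/-- A derivation: a function on primes (zero off primes) with finite norm. -/
def IsDeriv (ψ : ℕ → ℤ) : Prop :=
  (∀ p : ℕ, ¬ p.Prime → ψ p = 0) ∧ ∃ B : ℤ, ∀ p : ℕ, |ψ p| ≤ B

/-- The norm `‖ψ‖ = sup_p |ψ(p)|`. -/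
noncomputable def dNorm (ψ : ℕ → ℤ) : ℝ := ⨆ p : ℕ, (|ψ p| : ℝ)

/-- Membership in `𝒯(a,b)`: a derivation supported on the primes dividing `ab(a+b)`
satisfying `d^ψ(a+b) = d^ψ(a) + d^ψ(b)`. -/
def MemT (a b : ℕ) (ψ : ℕ → ℤ) : Prop :=
  IsDeriv ψ ∧ (∀ p : ℕ, p.Prime → ¬ p ∣ (a * b * (a + b)) → ψ p = 0) ∧
    dpsi ψ ((a : ℤ) + (b : ℤ)) = dpsi ψ (a : ℤ) + dpsi ψ (b : ℤ)

/-- The `ψ`-Wronskian `W^ψ(a,b) = a·d^ψ(b) − b·d^ψ(a)`. -/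
def Wpsi (ψ : ℕ → ℤ) (a b : ℤ) : ℤ := a * dpsi ψ b - b * dpsi ψ a

/-- Membership in `𝒯°(a,b)`: elements of `𝒯(a,b)` for which `a, b` are `ψ`-dependent. -/
def MemT0 (a b : ℕ) (ψ : ℕ → ℤ) : Prop := MemT a b ψ ∧ Wpsi ψ (a : ℤ) (b : ℤ) = 0

/-- The radical of `n`: product of the distinct primes dividing `n`. -/
def radN (n : ℕ) : ℕ := ∏ p ∈ n.primeFactors, p

/-- The Small Derivatives Conjecture with exponent `η`: for all but finitely many triples of
coprime positive integers `(a,b,c)` with `a+b=c`, not of the form `(1,N,q)` with `q` prime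
up to order, there is `ψ ∈ 𝒯(a,b)` with `a,b` `ψ`-independent and `‖ψ‖ < c^η`. -/
def SDC (η : ℝ) : Prop :=
  {t : ℕ × ℕ × ℕ | 0 < t.1 ∧ 0 < t.2.1 ∧ t.1 + t.2.1 = t.2.2 ∧ Nat.Coprime t.1 t.2.1 ∧
    ¬ (∃ N q : ℕ, q.Prime ∧ ({t.1, t.2.1, t.2.2} : Multiset ℕ) = {1, N, q}) ∧
    ¬ ∃ ψ : ℕ → ℤ, MemT t.1 t.2.1 ψ ∧ Wpsi ψ (t.1 : ℤ) (t.2.1 : ℤ) ≠ 0 ∧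
      dNorm ψ < (t.2.2 : ℝ) ^ η}.Finite


/-- Coefficient of `ψ p` in `d^ψ(a+b) - d^ψ(a) - d^ψ(b)`. -/
def lamC (a b p : ℕ) : ℤ :=
  (((a + b : ℕ) : ℤ) / (p : ℤ)) * ((a + b).factorization p : ℤ)
    - ((a : ℤ) / (p : ℤ)) * (a.factorization p : ℤ)
    - ((b : ℤ) / (p : ℤ)) * (b.factorization p : ℤ)

lemma dpsi_eq (ψ : ℕ → ℤ) (n : ℕ) (S : Finset ℕ) (h : n.primeFactors ⊆ S) :
    dpsi ψ (n : ℤ) = ∑ p ∈ S, ((n : ℤ) / (p : ℤ)) * (n.factorization p : ℤ) * ψ p := by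
  unfold dpsi
  rw [Int.natAbs_natCast]
  apply Finset.sum_subset h
  intro p _ hp
  have : n.factorization p = 0 := by
    rwa [← Finsupp.notMem_support_iff, Nat.support_factorization]
  simp [this]

lemma dpsi_iff (a b : ℕ) (ha : 0 < a) (hb : 0 < b) (ψ : ℕ → ℤ) :
    dpsi ψ ((a : ℤ) + (b : ℤ)) = dpsi ψ (a : ℤ) + dpsi ψ (b : ℤ) ↔
      ∑ p ∈ (a * b * (a + b)).primeFactors, lamC a b p * ψ p = 0 := by
  have h0 : a * b * (a + b) ≠ 0 := by positivity
  have h1 := dpsi_eq ψ a _ (Nat.primeFactors_mono (Dvd.intro (b * (a + b)) (by ring)) h0)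
  have h2 := dpsi_eq ψ b _ (Nat.primeFactors_mono (Dvd.intro (a * (a + b)) (by ring)) h0)
  have h3 := dpsi_eq ψ (a + b) _ (Nat.primeFactors_mono (Dvd.intro (a * b) (by ring)) h0)
  rw [← Nat.cast_add, h1, h2, h3, ← sub_eq_zero, ← Finset.sum_add_distrib,
    ← Finset.sum_sub_distrib]
  apply Eq.congr_left
  apply Finset.sum_congr rfl
  intro p _
  unfold lamC
  ring

lemma p_mul_div (n p : ℕ) :
    (p : ℤ) * (((n : ℤ) / (p : ℤ)) * (n.factorization p : ℤ)) = n * (n.factorization p : ℤ) := by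
  by_cases h : p ∣ n
  · rw [← mul_assoc, Int.mul_ediv_cancel' (Int.natCast_dvd_natCast.mpr h)]
  · simp [Nat.factorization_eq_zero_of_not_dvd h]

lemma exists_lamC (a b : ℕ) (ha : 0 < a) (hb : 0 < b) :
    ∃ q ∈ (a * b * (a + b)).primeFactors, lamC a b q ≠ 0 := by
  by_contra! hcon
  have h0 : a * b * (a + b) ≠ 0 := by positivity
  have key : ∀ p, (a + b) * (a + b).factorization p
      = a * a.factorization p + b * b.factorization p := by
    intro p
    by_cases hp : p ∈ (a * b * (a + b)).primeFactors
    · have h := hcon p hp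
      have h1 := p_mul_div a p
      have h2 := p_mul_div b p
      have h3 := p_mul_div (a + b) p
      unfold lamC at h
      zify
      push_cast at h h1 h2 h3 ⊢
      linear_combination (p : ℤ) * h - h3 + h1 + h2
    · have aux : ∀ n, n ∣ a * b * (a + b) → n.factorization p = 0 := by
        intro n hn
        rw [← Finsupp.notMem_support_iff, Nat.support_factorization]
        exact fun h => hp (Nat.primeFactors_mono hn h0 h)
      rw [aux a (Dvd.intro (b * (a + b)) (by ring)), aux b (Dvd.intro (a * (a + b)) (by ring)),
        aux (a + b) (Dvd.intro (a * b) (by ring))]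
      simp
  have heq : (a + b) ^ (a + b) = a ^ a * b ^ b := by
    apply Nat.eq_of_factorization_eq (by positivity) (by positivity)
    intro p
    rw [Nat.factorization_mul (by positivity) (by positivity), Nat.factorization_pow,
      Nat.factorization_pow, Nat.factorization_pow]
    simpa using key p
  have h1 : a ^ a < (a + b) ^ a := Nat.pow_lt_pow_left (by omega) (by omega)
  have h2 : b ^ b < (a + b) ^ b := Nat.pow_lt_pow_left (by omega) (by omega)
  have h3 := Nat.mul_lt_mul'' h1 h2
  rw [← pow_add] at h3
  omega

lemma memT_iff (a b : ℕ) (ha : 0 < a) (hb : 0 < b) (ψ : ℕ → ℤ) :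
    MemT a b ψ ↔ (∀ p, p ∉ (a * b * (a + b)).primeFactors → ψ p = 0) ∧
      ∑ p ∈ (a * b * (a + b)).primeFactors, lamC a b p * ψ p = 0 := by
  have h0 : a * b * (a + b) ≠ 0 := by positivity
  unfold MemT
  rw [dpsi_iff a b ha hb]
  constructor
  · rintro ⟨h1, h2, h3⟩
    refine ⟨fun p hp => ?_, h3⟩
    by_cases hpp : p.Prime
    · exact h2 p hpp fun hd => hp (Nat.mem_primeFactors.mpr ⟨hpp, hd, h0⟩)
    · exact h1.1 p hpp
  · rintro ⟨h1, h2⟩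
    refine ⟨⟨fun p hp => h1 p fun h => hp (Nat.prime_of_mem_primeFactors h),
      ∑ p ∈ (a * b * (a + b)).primeFactors, |ψ p|, fun p => ?_⟩,
      fun p _ hd => h1 p fun h => hd (Nat.dvd_of_mem_primeFactors h), h2⟩
    by_cases hp : p ∈ (a * b * (a + b)).primeFactors
    · exact Finset.single_le_sum (f := fun p => |ψ p|) (fun i _ => abs_nonneg _) hp
    · rw [h1 p hp, abs_zero]
      exact Finset.sum_nonneg fun i _ => abs_nonneg _

/-- Basic existence lemma: `𝒯(a,b)` is a saturated subgroup of the derivations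
of rank `ω(ab(a+b)) − 1`. -/
theorem basic_existence_lemma (a b : ℕ) (ha : 0 < a) (hb : 0 < b) :
    (MemT a b 0 ∧
      (∀ ψ φ : ℕ → ℤ, MemT a b ψ → MemT a b φ → MemT a b (ψ + φ)) ∧
      (∀ ψ : ℕ → ℤ, MemT a b ψ → MemT a b (-ψ))) ∧
    (∀ (k : ℤ) (ψ : ℕ → ℤ), k ≠ 0 → IsDeriv ψ →
      (∀ p : ℕ, p.Prime → ¬ p ∣ (a * b * (a + b)) → ψ p = 0) →
      MemT a b (k • ψ) → MemT a b ψ) ∧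
    (∃ ψs : Fin ((a * b * (a + b)).primeFactors.card - 1) → (ℕ → ℤ),
      (∀ i, MemT a b (ψs i)) ∧ LinearIndependent ℤ ψs) ∧
    (∀ ψs : Fin ((a * b * (a + b)).primeFactors.card) → (ℕ → ℤ),
      (∀ i, MemT a b (ψs i)) → ¬ LinearIndependent ℤ ψs) := by
  obtain ⟨q, hq, hlq⟩ := exists_lamC a b ha hb
  have hcard := Finset.card_erase_of_mem hq
  have hpos : 0 < (a * b * (a + b)).primeFactors.card := Finset.card_pos.mpr ⟨q, hq⟩
  simp only [memT_iff a b ha hb]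
  have h0 : a * b * (a + b) ≠ 0 := by positivity
  refine ⟨⟨by simp, ?_, ?_⟩, ?_, ?_, ?_⟩
  · generalize (a * b * (a + b)).primeFactors = S at *
    rintro ψ φ ⟨h1, h2⟩ ⟨h3, h4⟩
    refine ⟨fun p hp => by simp [h1 p hp, h3 p hp], ?_⟩
    simp only [Pi.add_apply, mul_add, Finset.sum_add_distrib, h2, h4, add_zero]
  · rintro ψ ⟨h1, h2⟩
    refine ⟨fun p hp => by simp [h1 p hp], ?_⟩
    simp only [Pi.neg_apply, mul_neg, Finset.sum_neg_distrib, h2, neg_zero]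
  · rintro k ψ hk - - ⟨h1, h2⟩
    refine ⟨fun p hp => by simpa [hk] using h1 p hp, ?_⟩
    simp only [Pi.smul_apply, smul_eq_mul, mul_left_comm _ k, ← Finset.mul_sum] at h2
    exact (mul_eq_zero.mp h2).resolve_left hk
  · generalize hS : (a * b * (a + b)).primeFactors = S at *
    let e : Fin (S.card - 1) ≃ (S.erase q) := (S.erase q).equivFinOfCardEq hcard |>.symm
    refine ⟨fun i => lamC a b q • Pi.single (e i : ℕ) (1 : ℤ)
      - lamC a b (e i) • Pi.single q (1 : ℤ), fun i => ⟨fun p hp => ?_, ?_⟩, ?_⟩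
    · have h1 : p ≠ (e i : ℕ) := fun h => hp (h ▸ Finset.mem_of_mem_erase (e i).2)
      have h2 : p ≠ q := fun h => hp (h ▸ hq)
      simp [h1, h2]
    · have h1 : (e i : ℕ) ∈ S := Finset.mem_of_mem_erase (e i).2
      simp [mul_sub, Finset.sum_sub_distrib, Pi.single_apply, h1, hq]
      ring
    · rw [Fintype.linearIndependent_iff]
      intro g hg i
      have h := congrFun hg (e i : ℕ)
      have hne : (e i : ℕ) ≠ q := Finset.ne_of_mem_erase (e i).2
      simp only [Finset.sum_apply, Pi.smul_apply, Pi.sub_apply, smul_eq_mul, Pi.single_apply, hne,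
        Pi.zero_apply] at h
      rw [Finset.sum_eq_single i] at h
      · simpa [hlq] using h
      · intro j _ hj
        have : (e i : ℕ) ≠ (e j : ℕ) := fun h => hj (e.injective (Subtype.ext h)).symm
        simp [this]
      · simp
  · generalize hS : (a * b * (a + b)).primeFactors = S at *
    intro ψs hψ hli
    have hli2 : LinearIndependent ℤ (fun i => (fun p : (S.erase q) => ψs i (p : ℕ))) := by
      rw [Fintype.linearIndependent_iff] at hli ⊢
      intro g hg
      apply hli g
      have hz : ∀ p ∈ S.erase q, ∑ i, g i * ψs i p = 0 := by
        intro p hp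
        simpa using congrFun hg ⟨p, hp⟩
      have hL : ∑ p ∈ S, lamC a b p * ∑ i, g i * ψs i p = 0 := by
        simp only [Finset.mul_sum]
        rw [Finset.sum_comm]
        apply Finset.sum_eq_zero
        intro i _
        simp only [mul_left_comm _ (g i), ← Finset.mul_sum, (hψ i).2, mul_zero]
      rw [← Finset.add_sum_erase _ _ hq, Finset.sum_eq_zero (s := S.erase q)
        (fun p hp => by rw [hz p hp, mul_zero]), add_zero] at hL
      have hqz := (mul_eq_zero.mp hL).resolve_left hlq
      funext p
      simp only [Finset.sum_apply, Pi.smul_apply, smul_eq_mul, Pi.zero_apply]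
      by_cases hp : p ∈ S
      · by_cases hpq : p = q
        · rw [hpq]; exact hqz
        · exact hz p (Finset.mem_erase.mpr ⟨hpq, hp⟩)
      · exact Finset.sum_eq_zero fun i _ => by rw [(hψ i).1 p hp, mul_zero]
    have := hli2.fintype_card_le_finrank
    rw [Module.finrank_fintype_fun_eq_card, Fintype.card_fin, Fintype.card_coe, hcard] at this
    omega
end

section
/- Small non-trivial derivatives: for every ε > 0, for all but finitely many triples (a,b,c) of pairwise coprime integers all larger than 1 satisfying a + b = c, there is a derivation ψ ∈ 𝒯(a,b) with ‖ψ‖ < c^{1/2 + ε} such that not all of the integers d^ψ(a), d^ψ(b), d^ψ(c) are zero. -/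
open Finset

theorem siegel3 (A B C N : ℕ) (h : A + B + C < N ^ 2) :
    ∃ x y z : ℤ, ¬ (x = 0 ∧ y = 0 ∧ z = 0) ∧ |x| ≤ N ∧ |y| ≤ N ∧ |z| ≤ N ∧
      (C : ℤ) * z = A * x + B * y := by
  classical
  let s : Finset (ℕ × ℕ × ℕ) := range (N + 1) ×ˢ (range (N + 1) ×ˢ range (N + 1))
  let f : ℕ × ℕ × ℕ → ℕ := fun t => A * t.1 + B * t.2.1 + C * (N - t.2.2)
  have hmaps : ∀ t ∈ s, f t ∈ range ((A + B + C) * N + 1) := by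
    intro t ht
    simp only [s, mem_product, mem_range] at ht
    obtain ⟨h1, h2, h3⟩ := ht
    simp only [f, mem_range]
    have e1 : A * t.1 ≤ A * N := Nat.mul_le_mul_left _ (by omega)
    have e2 : B * t.2.1 ≤ B * N := Nat.mul_le_mul_left _ (by omega)
    have e3 : C * (N - t.2.2) ≤ C * N := Nat.mul_le_mul_left _ (by omega)
    have : (A + B + C) * N = A * N + B * N + C * N := by ring
    omega
  have hcard : (range ((A + B + C) * N + 1)).card < s.card := by
    simp only [s, card_product, card_range]
    have : (A + B + C) * N ≤ N ^ 2 * N := Nat.mul_le_mul_right _ h.le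
    have hN : 0 < N := by
      rcases Nat.eq_zero_or_pos N with h0 | h0
      · subst h0; simp at h
      · exact h0
    nlinarith
  obtain ⟨t, ht, u, hu, htu, hf⟩ := exists_ne_map_eq_of_card_lt_of_maps_to hcard hmaps
  obtain ⟨t1, t2, t3⟩ := t
  obtain ⟨u1, u2, u3⟩ := u
  simp only [s, mem_product, mem_range] at ht hu
  obtain ⟨h1, h2, h3⟩ := ht
  obtain ⟨k1, k2, k3⟩ := hu
  refine ⟨(t1 : ℤ) - u1, (t2 : ℤ) - u2, (t3 : ℤ) - u3, ?_, ?_, ?_, ?_, ?_⟩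
  · rintro ⟨e1, e2, e3⟩
    apply htu
    simp only [Prod.mk.injEq]
    omega
  · rw [abs_le]; omega
  · rw [abs_le]; omega
  · rw [abs_le]; omega
  · simp only [f] at hf
    zify [show t3 ≤ N by omega, show u3 ≤ N by omega] at hf
    linarith

theorem dpsi_single (ψ : ℕ → ℤ) (a p : ℕ) (hp : p.Prime) (ha : a ≠ 0) (hpa : p ∣ a)
    (h : ∀ q : ℕ, q.Prime → q ∣ a → q ≠ p → ψ q = 0) :
    dpsi ψ (a : ℤ) = ((a / p * a.factorization p : ℕ) : ℤ) * ψ p := by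
  unfold dpsi
  rw [Int.natAbs_natCast, sum_eq_single p]
  · push_cast; rfl
  · intro q hq hne
    rw [h q (Nat.prime_of_mem_primeFactors hq) (Nat.dvd_of_mem_primeFactors hq) hne, mul_zero]
  · intro hh
    exact absurd (Nat.mem_primeFactors.2 ⟨hp, hpa, ha⟩) hh

theorem coeff_pos (a p : ℕ) (hp : p.Prime) (ha : a ≠ 0) (hpa : p ∣ a) :
    a / p * a.factorization p ≠ 0 := by
  have h1 : 0 < a / p := Nat.div_pos (Nat.le_of_dvd (Nat.pos_of_ne_zero ha) hpa) hp.pos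
  have h2 : 0 < a.factorization p := hp.factorization_pos_of_dvd ha hpa
  positivity

theorem coeff_le (a c p : ℕ) (hp : p.Prime) (ha : a ≠ 0) (hac : a ≤ c) :
    a / p * a.factorization p ≤ a * Nat.log 2 c := by
  refine Nat.mul_le_mul (Nat.div_le_self _ _) ?_
  apply Nat.le_log_of_pow_le (by norm_num)
  calc 2 ^ a.factorization p ≤ p ^ a.factorization p := Nat.pow_le_pow_left hp.two_le _
    _ ≤ a := Nat.ordProj_le p ha
    _ ≤ c := hac

theorem exists_psi (a b : ℕ) (ha : 1 < a) (hb : 1 < b) (hab : Nat.Coprime a b)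
    (hac : Nat.Coprime a (a + b)) (hbc : Nat.Coprime b (a + b)) (N : ℕ)
    (hN : 2 * (a + b) * Nat.log 2 (a + b) < N ^ 2) :
    ∃ ψ : ℕ → ℤ, MemT a b ψ ∧ dNorm ψ ≤ N ∧
        ¬ (dpsi ψ (a : ℤ) = 0 ∧ dpsi ψ (b : ℤ) = 0 ∧ dpsi ψ ((a + b : ℕ) : ℤ) = 0) := by
  obtain ⟨p, hp, hpa⟩ := Nat.exists_prime_and_dvd (show a ≠ 1 by omega)
  obtain ⟨q, hq, hqb⟩ := Nat.exists_prime_and_dvd (show b ≠ 1 by omega)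
  obtain ⟨r, hr, hrc⟩ := Nat.exists_prime_and_dvd (show a + b ≠ 1 by omega)
  have key : ∀ {m n l : ℕ}, Nat.Coprime m n → l.Prime → l ∣ m → l ∣ n → False :=
    fun h hl h1 h2 => Nat.not_coprime_of_dvd_of_dvd hl.one_lt h1 h2 h
  have hpq : p ≠ q := by rintro rfl; exact key hab hp hpa hqb
  have hpr : p ≠ r := by rintro rfl; exact key hac hp hpa hrc
  have hqr : q ≠ r := by rintro rfl; exact key hbc hq hqb hrc
  have LA := coeff_le a (a + b) p hp (by omega) (by omega)
  have LB := coeff_le b (a + b) q hq (by omega) (by omega)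
  have LC := coeff_le (a + b) (a + b) r hr (by omega) le_rfl
  have PA := coeff_pos a p hp (by omega) hpa
  have PB := coeff_pos b q hq (by omega) hqb
  have PC := coeff_pos (a + b) r hr (by omega) hrc
  obtain ⟨x, y, z, hne, hx, hy, hz, he⟩ := siegel3 (a / p * a.factorization p)
    (b / q * b.factorization q) ((a + b) / r * (a + b).factorization r) N (by nlinarith)
  let ψ : ℕ → ℤ := fun n => if n = p then x else if n = q then y else if n = r then z else 0
  have vp : ψ p = x := by simp [ψ]
  have vq : ψ q = y := by simp [ψ, hpq.symm]
  have vr : ψ r = z := by simp [ψ, hpr.symm, hqr.symm]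
  have v0 : ∀ n, n ≠ p → n ≠ q → n ≠ r → ψ n = 0 := by
    intro n h1 h2 h3; simp [ψ, h1, h2, h3]
  have da := dpsi_single ψ a p hp (by omega) hpa (by
    intro l hl hla hlp
    apply v0 l hlp
    · rintro rfl; exact key hab hl hla hqb
    · rintro rfl; exact key hac hl hla hrc)
  have db := dpsi_single ψ b q hq (by omega) hqb (by
    intro l hl hla hlp
    apply v0 l _ hlp
    · rintro rfl; exact key hbc hl hla hrc
    · rintro rfl; exact key hab hl hpa hla)
  have dc := dpsi_single ψ (a + b) r hr (by omega) hrc (by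
    intro l hl hla hlp
    apply v0 l _ _ hlp
    · rintro rfl; exact key hac hl hpa hla
    · rintro rfl; exact key hbc hl hqb hla)
  rw [vp] at da
  rw [vq] at db
  rw [vr] at dc
  have hbd : ∀ n, |ψ n| ≤ (N : ℤ) := by
    intro n
    simp only [ψ]
    split_ifs
    · exact hx
    · exact hy
    · exact hz
    · simp
  refine ⟨ψ, ⟨⟨?_, N, hbd⟩, ?_, ?_⟩, ?_, ?_⟩
  · intro n hn
    apply v0
    · rintro rfl; exact hn hp
    · rintro rfl; exact hn hq
    · rintro rfl; exact hn hr
  · intro n _ hnd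
    apply v0
    · rintro rfl; exact hnd ((hpa.mul_right _).mul_right _)
    · rintro rfl; exact hnd ((hqb.mul_left _).mul_right _)
    · rintro rfl; exact hnd (hrc.mul_left _)
  · rw [da, db, ← Nat.cast_add, dc, he]
  · apply ciSup_le
    intro n
    exact_mod_cast hbd n
  · rintro ⟨e1, e2, e3⟩
    rw [da] at e1
    rw [db] at e2
    rw [dc] at e3
    apply hne
    refine ⟨?_, ?_, ?_⟩
    · exact (mul_eq_zero.1 e1).resolve_left (by exact_mod_cast PA)
    · exact (mul_eq_zero.1 e2).resolve_left (by exact_mod_cast PB)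
    · exact (mul_eq_zero.1 e3).resolve_left (by exact_mod_cast PC)

theorem asym (ε : ℝ) (hε : 0 < ε) : ∃ M : ℕ, ∀ c : ℕ, M ≤ c →
    ((Nat.sqrt (2 * c * Nat.log 2 c) + 1 : ℕ) : ℝ) < (c : ℝ) ^ ((1 : ℝ) / 2 + ε) := by
  have hl2 : 0 < Real.log 2 := Real.log_pos (by norm_num)
  set K : ℝ := 2 / (ε * Real.log 2) with hK
  have hK0 : 0 < K := by positivity
  have ht : Filter.Tendsto (fun c : ℕ => (c : ℝ) ^ (ε / 2)) Filter.atTop Filter.atTop :=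
    (tendsto_rpow_atTop (by positivity)).comp tendsto_natCast_atTop_atTop
  obtain ⟨M, hM⟩ := Filter.eventually_atTop.1 (ht.eventually_gt_atTop (Real.sqrt K + 1))
  refine ⟨M + 1, fun c hc => ?_⟩
  have h1 := hM c (by omega)
  have hc1 : (1 : ℝ) ≤ c := by exact_mod_cast (show 1 ≤ c by omega)
  have hc0 : (0 : ℝ) < c := by linarith
  set u : ℝ := (c : ℝ) ^ (1 / 2 + ε / 2) with hu
  have hu1 : 1 ≤ u := Real.one_le_rpow hc1 (by positivity)
  have hL : (Nat.log 2 c : ℝ) ≤ (c : ℝ) ^ ε / (ε * Real.log 2) := by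
    have e1 : (Nat.log 2 c : ℝ) ≤ Real.logb 2 c := by
      exact_mod_cast Real.natLog_le_logb c 2
    have e2 := Real.log_le_rpow_div hc0.le hε
    refine e1.trans ?_
    rw [Real.logb, ← div_div]
    gcongr
  have hS : ((2 * c * Nat.log 2 c : ℕ) : ℝ) ≤ K * u ^ 2 := by
    have : u ^ 2 = c * (c : ℝ) ^ ε := by
      rw [hu, ← Real.rpow_natCast, ← Real.rpow_mul hc0.le, ← Real.rpow_one_add' hc0.le (by positivity)]
      congr 1; push_cast; ring
    rw [this, hK]
    push_cast
    calc 2 * (c : ℝ) * Nat.log 2 c ≤ 2 * (c : ℝ) * ((c : ℝ) ^ ε / (ε * Real.log 2)) := by gcongr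
      _ = _ := by ring
  have hs : ((Nat.sqrt (2 * c * Nat.log 2 c) : ℕ) : ℝ) ≤ Real.sqrt K * u := by
    refine Real.nat_sqrt_le_real_sqrt.trans ?_
    refine (Real.sqrt_le_sqrt hS).trans ?_
    rw [Real.sqrt_mul hK0.le, Real.sqrt_sq (by linarith)]
  have hfin : (c : ℝ) ^ ((1 : ℝ) / 2 + ε) = c ^ (ε / 2) * u := by
    rw [hu, ← Real.rpow_add hc0]; congr 1; ring
  rw [hfin]
  push_cast
  calc _ ≤ (Real.sqrt K + 1) * u := by linarith
    _ < _ := by gcongr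

/-- Small non-trivial derivatives. -/
theorem small_nontrivial_derivatives (ε : ℝ) (hε : 0 < ε) :
    {t : ℕ × ℕ × ℕ | 1 < t.1 ∧ 1 < t.2.1 ∧ 1 < t.2.2 ∧ t.1 + t.2.1 = t.2.2 ∧
      Nat.Coprime t.1 t.2.1 ∧ Nat.Coprime t.1 t.2.2 ∧ Nat.Coprime t.2.1 t.2.2 ∧
      ¬ ∃ ψ : ℕ → ℤ, MemT t.1 t.2.1 ψ ∧ dNorm ψ < (t.2.2 : ℝ) ^ ((1 : ℝ) / 2 + ε) ∧
        ¬ (dpsi ψ (t.1 : ℤ) = 0 ∧ dpsi ψ (t.2.1 : ℤ) = 0 ∧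
            dpsi ψ (t.2.2 : ℤ) = 0)}.Finite := by
  obtain ⟨M, hM⟩ := asym ε hε
  apply ((finite_toSet (range M ×ˢ (range M ×ˢ range M)))).subset
  rintro ⟨a, b, c⟩ ⟨ha, hb, hc, habc, hab, hac, hbc, hno⟩
  simp only at ha hb hc habc hab hac hbc hno
  subst habc
  by_cases hlt : a + b < M
  · simp only [coe_product, coe_range, Set.mem_prod, Set.mem_Iio]
    omega
  · exfalso
    apply hno
    obtain ⟨ψ, h1, h2, h3⟩ := exists_psi a b ha hb hab hac hbc
      (Nat.sqrt (2 * (a + b) * Nat.log 2 (a + b)) + 1) (Nat.lt_succ_sqrt' _)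
    exact ⟨ψ, h1, h2.trans_lt (hM _ (by omega)), h3⟩
end

section
/- An abc estimate: let a, b be coprime positive integers with (a,b) ≠ (1,1), let c = a + b, and let ψ ∈ 𝒯(a,b). If a and b are ψ-independent, then c / log c ≤ rad(abc) · ‖ψ‖ / log 2. -/
open Finset

lemma dvd_rad_mul (ψ : ℕ → ℤ) (n M : ℕ) (hM : M ≠ 0) (h : n ∣ M) :
    (n : ℤ) ∣ (radN M : ℤ) * dpsi ψ (n : ℤ) := by
  unfold dpsi
  rw [Finset.mul_sum]
  apply Finset.dvd_sum
  intro p hp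
  simp only [Int.natAbs_natCast] at hp ⊢
  have hpn : p ∣ n := Nat.dvd_of_mem_primeFactors hp
  have hpM : p ∣ radN M := by
    unfold radN
    exact Finset.dvd_prod_of_mem _ (Nat.primeFactors_mono h hM hp)
  obtain ⟨k, hk⟩ := hpM
  have hz : (p : ℤ) * ((n : ℤ) / (p : ℤ)) = n :=
    Int.mul_ediv_cancel' (by exact_mod_cast hpn)
  rw [hk]
  refine ⟨(k : ℤ) * (n.factorization p : ℤ) * ψ p, ?_⟩
  push_cast
  linear_combination (k : ℤ) * (n.factorization p : ℤ) * ψ p * hz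

lemma dpsi_bound (ψ : ℕ → ℤ) (N : ℝ) (hN : ∀ p, |(ψ p : ℝ)| ≤ N) (n : ℕ) (hn : 0 < n) :
    2 * |(dpsi ψ (n : ℤ) : ℝ)| * Real.log 2 ≤ n * N * Real.log n := by
  have hl2 : 0 < Real.log 2 := Real.log_pos (by norm_num)
  have hlog : Real.log n = ∑ p ∈ n.primeFactors, (n.factorization p : ℝ) * Real.log p := by
    rw [Real.log_nat_eq_sum_factorization]
    rfl
  have h1 : |(dpsi ψ (n : ℤ) : ℝ)| ≤ ∑ p ∈ n.primeFactors,
      |(((n : ℤ) / (p : ℤ) * (n.factorization p : ℤ) * ψ p : ℤ) : ℝ)| := by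
    unfold dpsi
    simp only [Int.natAbs_natCast]
    rw [Int.cast_sum]
    exact Finset.abs_sum_le_sum_abs _ _
  calc 2 * |(dpsi ψ (n : ℤ) : ℝ)| * Real.log 2
      ≤ 2 * (∑ p ∈ n.primeFactors,
      |(((n : ℤ) / (p : ℤ) * (n.factorization p : ℤ) * ψ p : ℤ) : ℝ)|) * Real.log 2 := by
        gcongr
    _ = ∑ p ∈ n.primeFactors, 2 *
      |(((n : ℤ) / (p : ℤ) * (n.factorization p : ℤ) * ψ p : ℤ) : ℝ)| * Real.log 2 := by
        rw [Finset.mul_sum, Finset.sum_mul]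
    _ ≤ ∑ p ∈ n.primeFactors, n * N * ((n.factorization p : ℝ) * Real.log p) := by
        apply Finset.sum_le_sum
        intro p hp
        have hpp := Nat.prime_of_mem_primeFactors hp
        have hpn : p ∣ n := Nat.dvd_of_mem_primeFactors hp
        obtain ⟨k, hk⟩ := hpn
        have hp0 : (p : ℤ) ≠ 0 := by exact_mod_cast hpp.ne_zero
        have hdiv : (n : ℤ) / (p : ℤ) = k := by
          rw [hk]; push_cast; exact Int.mul_ediv_cancel_left _ hp0
        have hp2 : (2 : ℝ) ≤ p := by exact_mod_cast hpp.two_le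
        have hnk : (2 : ℝ) * k ≤ n := by
          have : (n : ℝ) = p * k := by exact_mod_cast hk
          rw [this]; gcongr
        have hlp : Real.log 2 ≤ Real.log p := Real.log_le_log (by norm_num) hp2
        rw [hdiv]
        push_cast
        rw [abs_mul, abs_mul, Nat.abs_cast, Nat.abs_cast]
        have hN0 : 0 ≤ N := (abs_nonneg _).trans (hN 0)
        calc 2 * ((k : ℝ) * (n.factorization p : ℝ) * |(ψ p : ℝ)|) * Real.log 2
            = (2 * k) * |(ψ p : ℝ)| * ((n.factorization p : ℝ) * Real.log 2) := by ring
          _ ≤ _ := by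
            have := hN p
            gcongr
    _ = _ := by rw [hlog, Finset.mul_sum]

/-- An abc estimate via arithmetic derivatives. -/
theorem abc_estimate (a b : ℕ) (ha : 0 < a) (hb : 0 < b) (hab : Nat.Coprime a b)
    (hne : ¬ (a = 1 ∧ b = 1)) (ψ : ℕ → ℤ) (hψ : MemT a b ψ)
    (hind : Wpsi ψ (a : ℤ) (b : ℤ) ≠ 0) :
    ((a + b : ℕ) : ℝ) / Real.log ((a + b : ℕ) : ℝ) ≤
      (radN (a * b * (a + b)) : ℝ) * dNorm ψ / Real.log 2 := by
  obtain ⟨⟨-, B, hB⟩, -, hd⟩ := hψ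
  have hN : ∀ p, |(ψ p : ℝ)| ≤ dNorm ψ := by
    intro p
    unfold dNorm
    refine le_ciSup (f := fun p : ℕ => |(ψ p : ℝ)|) ⟨(B : ℝ), ?_⟩ p
    rintro _ ⟨q, rfl⟩
    have := hB q
    simp only
    exact_mod_cast this
  have hM : a * b * (a + b) ≠ 0 := by positivity
  have hA := dvd_rad_mul ψ a _ hM ⟨b * (a + b), by ring⟩
  have hBd := dvd_rad_mul ψ b _ hM ⟨a * (a + b), by ring⟩
  have hC := dvd_rad_mul ψ (a + b) _ hM ⟨a * b, by ring⟩
  have bA := dpsi_bound ψ _ hN a ha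
  have bB := dpsi_bound ψ _ hN b hb
  have hR : 0 < radN (a * b * (a + b)) := by
    unfold radN
    exact Finset.prod_pos fun p hp => (Nat.prime_of_mem_primeFactors hp).pos
  generalize radN (a * b * (a + b)) = R at *
  generalize dNorm ψ = N at *
  push_cast at hC
  unfold Wpsi at hind
  rw [hd] at hC
  generalize dpsi ψ (a : ℤ) = x at *
  generalize dpsi ψ (b : ℤ) = y at *
  have h1 : (a : ℤ) ∣ R * (a * y - b * x) := by
    have := dvd_sub (dvd_mul_right (a : ℤ) (R * y)) (hA.mul_left (b : ℤ))
    refine this.trans (dvd_of_eq ?_); ring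
  have h2 : (b : ℤ) ∣ R * (a * y - b * x) := by
    have := dvd_sub (hBd.mul_left (a : ℤ)) (dvd_mul_right (b : ℤ) (R * x))
    refine this.trans (dvd_of_eq ?_); ring
  have h3 : (a + b : ℤ) ∣ R * (a * y - b * x) := by
    have := dvd_sub (hC.mul_left (a : ℤ)) (dvd_mul_right (a + b : ℤ) (R * x))
    refine this.trans (dvd_of_eq ?_); ring
  have hcop : IsCoprime (a : ℤ) b := Nat.isCoprime_iff_coprime.mpr hab
  have hac : IsCoprime (a : ℤ) (a + b) := by
    obtain ⟨u, v, h⟩ := hcop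
    exact ⟨u - v, v, by linear_combination h⟩
  have hbc : IsCoprime (b : ℤ) (a + b) := by
    obtain ⟨u, v, h⟩ := hcop
    exact ⟨v - u, u, by linear_combination h⟩
  have h4 := (hac.mul_left hbc).mul_dvd (hcop.mul_dvd h1 h2) h3
  have hle := Int.le_of_dvd (abs_pos.mpr (mul_ne_zero (by exact_mod_cast hR.ne') hind))
    ((dvd_abs _ _).mpr h4)
  have hle' : (a * b * (a + b) : ℝ) ≤ R * |(a * y - b * x : ℝ)| := by
    have : (a * b * (a + b) : ℝ) ≤ |(R * (a * y - b * x) : ℝ)| := by exact_mod_cast hle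
    rwa [abs_mul, Nat.abs_cast] at this
  have hN0 : 0 ≤ N := (abs_nonneg _).trans (hN 0)
  have ha' : (0 : ℝ) < a := by exact_mod_cast ha
  have hb' : (0 : ℝ) < b := by exact_mod_cast hb
  have hl2 : 0 < Real.log 2 := Real.log_pos (by norm_num)
  have hc1 : (1 : ℝ) < (a : ℝ) + b := by
    have : 1 < a + b := by omega
    exact_mod_cast this
  have hlc : 0 < Real.log ((a : ℝ) + b) := Real.log_pos hc1
  have la : Real.log (a : ℝ) ≤ Real.log ((a : ℝ) + b) := Real.log_le_log ha' (by linarith)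
  have lb : Real.log (b : ℝ) ≤ Real.log ((a : ℝ) + b) := Real.log_le_log hb' (by linarith)
  push_cast
  rw [div_le_div_iff₀ hlc hl2]
  have hW : |(a * y - b * x : ℝ)| ≤ a * |(y : ℝ)| + b * |(x : ℝ)| := by
    refine (abs_sub _ _).trans ?_
    rw [abs_mul, abs_mul, Nat.abs_cast, Nat.abs_cast]
  have bA' : 2 * |(x : ℝ)| * Real.log 2 ≤ a * N * Real.log ((a : ℝ) + b) :=
    bA.trans (by gcongr)
  have bB' : 2 * |(y : ℝ)| * Real.log 2 ≤ b * N * Real.log ((a : ℝ) + b) :=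
    bB.trans (by gcongr)
  have hW2 : |(a * y - b * x : ℝ)| * Real.log 2 ≤ a * b * (N * Real.log ((a : ℝ) + b)) := by
    have e1 := mul_le_mul_of_nonneg_left bA' hb'.le
    have e2 := mul_le_mul_of_nonneg_left bB' ha'.le
    have e3 := mul_le_mul_of_nonneg_right hW hl2.le
    linarith
  have hab' : (0 : ℝ) < a * b := by positivity
  refine le_of_mul_le_mul_left ?_ hab'
  have e4 := mul_le_mul_of_nonneg_right hle' hl2.le
  have e5 := mul_le_mul_of_nonneg_left hW2 (Nat.cast_nonneg (α := ℝ) R)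
  linarith
end

section
/- For every positive integer n and every derivation ψ, the integer n divides gcd(n, d^ψ(n)) · rad(n). -/
open Finset

/-- `n` divides `gcd(n, d^ψ(n)) · rad(n)`. -/
theorem dvd_gcd_mul_radical (n : ℕ) (hn : 0 < n) (ψ : ℕ → ℤ) (hψ : IsDeriv ψ) :
    (n : ℤ) ∣ (Int.gcd (n : ℤ) (dpsi ψ (n : ℤ)) : ℤ) * (radN n : ℤ) := by
  have hr : radN n ∣ n := Nat.prod_primeFactors_dvd n
  obtain ⟨m, hm⟩ := hr
  have h1 : (m : ℤ) ∣ (n : ℤ) := by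
    rw [hm]; push_cast; exact Dvd.intro_left _ rfl
  have h2 : (m : ℤ) ∣ dpsi ψ (n : ℤ) := by
    unfold dpsi
    refine Finset.dvd_sum fun p hp => ?_
    rw [Int.natAbs_natCast] at hp
    have hp0 : (p : ℤ) ≠ 0 := by
      exact_mod_cast (Nat.prime_of_mem_primeFactors hp).ne_zero
    obtain ⟨k, hk⟩ : p ∣ radN n := Finset.dvd_prod_of_mem (fun p => p) hp
    have h3 : (n : ℤ) / (p : ℤ) = (m : ℤ) * k := by
      apply Int.ediv_eq_of_eq_mul_right hp0
      have h4 : (n : ℤ) = (radN n : ℤ) * m := by exact_mod_cast hm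
      rw [h4, hk]; push_cast; ring
    rw [h3, mul_assoc, mul_assoc]
    exact Dvd.intro _ rfl
  have h5 : (n : ℤ) = (m : ℤ) * (radN n : ℤ) := by
    rw [mul_comm]; exact_mod_cast hm
  have h6 := mul_dvd_mul_right (Int.dvd_coe_gcd h1 h2) (radN n : ℤ)
  rw [← h5] at h6
  exact h6
end

section
/- Up to permutation of a, b, c, the only triples of pairwise coprime positive integers a, b, c with a + b = c and ω(abc) ≤ 2 are: (1,1,2), (1,8,9), and (1, 2ⁿ, q) with q prime and n ≥ 1 (where either 2ⁿ + 1 = q or q + 1 = 2ⁿ, i.e. the triple is {1, 2ⁿ, q} with the largest element equal to the sum of the other two). -/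
open Finset

theorem aux_geom (x : ℤ) (m n : ℕ) (hx : Odd x) (hm : Odd m) (h : x ^ m - 1 ∣ 2 ^ n) :
    |x ^ m - 1| = |x - 1| := by
  have key : ∀ k : ℕ, (2 : ℤ) ∣ (∑ i ∈ Finset.range k, x ^ i) - k := by
    intro k
    induction k with
    | zero => simp
    | succ k ih =>
      rw [Finset.sum_range_succ]
      have h2 : Odd (x ^ k) := hx.pow
      obtain ⟨r, hr⟩ := h2
      push_cast
      omega
  have hS := geom_sum_mul x m
  have hodd : Odd (∑ i ∈ Finset.range m, x ^ i) := by
    have := key m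
    obtain ⟨r, hr⟩ := hm
    rw [Int.odd_iff]
    omega
  have hd : (∑ i ∈ Finset.range m, x ^ i) ∣ 2 ^ n := (Dvd.intro _ hS).trans h
  have hu : IsUnit (∑ i ∈ Finset.range m, x ^ i) := by
    have hc : IsCoprime (∑ i ∈ Finset.range m, x ^ i) (2 ^ n) :=
      IsCoprime.pow_right (by
          obtain ⟨r, hr⟩ := hodd
          exact ⟨1, -r, by rw [hr]; ring⟩)
    exact hc.isUnit_of_dvd' dvd_rfl hd
  rw [← hS, abs_mul, Int.isUnit_iff_abs_eq.1 hu, one_mul]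

theorem aux_one (q m : ℕ) (hq : 1 < q) (h : q ^ m = q) : m = 1 :=
  Nat.pow_right_injective hq (by simpa using h)

theorem aux_plus (q m n : ℕ) (hq : q.Prime) (hm : 0 < m) (ho : Odd q) (h : q ^ m + 1 = 2 ^ n) :
    m = 1 := by
  have hq2 := hq.two_le
  have hqm : q ≤ q ^ m := Nat.le_self_pow hm.ne' q
  rcases Nat.even_or_odd m with he | hmo
  · exfalso
    obtain ⟨k, rfl⟩ := he
    obtain ⟨r, hr⟩ : Odd (q ^ k) := ho.pow
    rcases n with _ | _ | n
    · simp at h; omega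
    · simp at h; omega
    · rw [pow_add, hr, pow_succ, pow_succ] at h
      ring_nf at h
      omega
  · apply aux_one q m hq.one_lt
    have h1 := aux_geom (-(q : ℤ)) m n (by simpa using ho) hmo (by
      rw [hmo.neg_pow]
      have : (2 : ℤ) ^ n = (q : ℤ) ^ m + 1 := by exact_mod_cast h.symm
      rw [this]
      exact ⟨-1, by ring⟩)
    rw [hmo.neg_pow, abs_of_neg, abs_of_neg] at h1
    · have : (q : ℤ) ^ m = q := by linarith
      exact_mod_cast this
    · linarith [Int.natCast_nonneg q]
    · have : (0 : ℤ) ≤ (q : ℤ) ^ m := by positivity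
      linarith

theorem aux_minus (q m n : ℕ) (hq : q.Prime) (hm : 0 < m) (ho : Odd q) (h : 2 ^ n + 1 = q ^ m) :
    m = 1 ∨ 2 ^ n = 8 := by
  have hq2 := hq.two_le
  rcases Nat.even_or_odd m with he | hmo
  · right
    obtain ⟨k, rfl⟩ := he
    have hk : k ≠ 0 := by omega
    have hqk : q ≤ q ^ k := Nat.le_self_pow hk q
    obtain ⟨r, hr⟩ : Odd (q ^ k) := ho.pow
    rw [pow_add, hr] at h
    have h4 : 2 ^ n = (2 * r) * (2 * r + 2) := by
      have : (2 * r + 1) * (2 * r + 1) = (2 * r) * (2 * r + 2) + 1 := by ring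
      omega
    obtain ⟨i, -, hi⟩ := (Nat.dvd_prime_pow Nat.prime_two).1 (Dvd.intro _ h4.symm)
    obtain ⟨j, -, hj⟩ := (Nat.dvd_prime_pow Nat.prime_two).1 (Dvd.intro_left _ h4.symm)
    have hr1 : r = 1 := by
      rcases i with _ | _ | i
      · simp at hi
      · simp at hi; omega
      · rcases j with _ | _ | j
        · simp at hj
        · simp at hj; omega
        · simp only [pow_succ] at hi hj; omega
    rw [h4, hr1]
  · left
    apply aux_one q m hq.one_lt
    have h1 := aux_geom (q : ℤ) m n (by simpa using ho) hmo (by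
      have : (2 : ℤ) ^ n + 1 = (q : ℤ) ^ m := by exact_mod_cast h
      rw [← this]
      exact ⟨1, by ring⟩)
    have h2 : (2 : ℤ) ^ n + 1 = (q : ℤ) ^ m := by exact_mod_cast h
    have h3 : (0 : ℤ) < 2 ^ n := by positivity
    rw [abs_of_nonneg, abs_of_nonneg] at h1
    · have : (q : ℤ) ^ m = q := by linarith
      exact_mod_cast this
    · have : (2 : ℤ) ≤ q := by exact_mod_cast hq2
      linarith
    · linarith

theorem aux_main (b : ℕ) (h1 : IsPrimePow b) (h2 : IsPrimePow (b + 1)) :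
    b = 8 ∨ ∃ n q : ℕ, 1 ≤ n ∧ q.Prime ∧ ((b = 2 ^ n ∧ b + 1 = q) ∨ (b = q ∧ b + 1 = 2 ^ n)) := by
  obtain ⟨p, k, hp, hk, hpk⟩ := (isPrimePow_nat_iff _).1 h1
  obtain ⟨q, m, hq, hm, hqm⟩ := (isPrimePow_nat_iff _).1 h2
  rcases Nat.even_or_odd b with hb | hb
  · have hp2 : p = 2 := by
      rw [← hpk] at hb
      exact hp.even_iff.1 (Nat.even_pow.1 hb).1
    subst hp2
    have ho : Odd q := by
      have : Odd (q ^ m) := by rw [hqm]; exact hb.add_one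
      exact (Nat.odd_pow_iff hm.ne').1 this
    rcases aux_minus q m k hq hm ho (by rw [hpk, hqm]) with h | h
    · subst h
      exact Or.inr ⟨k, q, hk, hq, Or.inl ⟨hpk.symm, by simpa using hqm.symm⟩⟩
    · left; omega
  · have hq2 : q = 2 := by
      have : Even (q ^ m) := by rw [hqm]; exact hb.add_one
      exact hq.even_iff.1 (Nat.even_pow.1 this).1
    subst hq2
    have ho : Odd p := by
      rw [← hpk] at hb
      exact (Nat.odd_pow_iff hk.ne').1 hb
    have h := aux_plus p k m hp hk ho (by rw [hpk, hqm])
    subst h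
    exact Or.inr ⟨m, p, hm, hp, Or.inr ⟨by simpa using hpk.symm, hqm.symm⟩⟩

theorem aux_card (n : ℕ) (h : 2 ≤ n) : 1 ≤ n.primeFactors.card :=
  Finset.card_pos.2 (Nat.nonempty_primeFactors.2 h)

theorem aux_one_case (b c : ℕ) (hb : 0 < b) (h3 : Nat.Coprime b c)
    (habc : 1 + b = c) (hω : (b * c).primeFactors.card ≤ 2) :
    ({1, b, c} : Multiset ℕ) = {1, 1, 2} ∨ ({1, b, c} : Multiset ℕ) = {1, 8, 9} ∨
    ∃ n q : ℕ, 1 ≤ n ∧ q.Prime ∧ ({1, b, c} : Multiset ℕ) = {1, 2 ^ n, q} := by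
  rcases Nat.lt_or_ge b 2 with hlt | hge
  · obtain rfl : b = 1 := by omega
    subst habc
    left; rfl
  right
  rw [h3.primeFactors_mul, Finset.card_union_of_disjoint h3.disjoint_primeFactors] at hω
  have e1 := aux_card b hge
  have e2 := aux_card c (by omega)
  have p1 : IsPrimePow b := isPrimePow_iff_card_primeFactors_eq_one.2 (by omega)
  have p2 : IsPrimePow c := isPrimePow_iff_card_primeFactors_eq_one.2 (by omega)
  obtain rfl : c = b + 1 := by omega
  rcases aux_main b p1 p2 with rfl | ⟨n, q, hn, hq, ⟨h, h'⟩ | ⟨h, h'⟩⟩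
  · left; rfl
  · right; exact ⟨n, q, hn, hq, by rw [h', h]⟩
  · right; exact ⟨n, q, hn, hq, by rw [h', h]; congr 1; exact Multiset.pair_comm _ _⟩

/-- Classification of coprime triples `a + b = c` with `ω(abc) ≤ 2`, up to order. -/
theorem omega_le_two_classification (a b c : ℕ) (ha : 0 < a) (hb : 0 < b) (hc : 0 < c)
    (h1 : Nat.Coprime a b) (h2 : Nat.Coprime a c) (h3 : Nat.Coprime b c)
    (habc : a + b = c) (hω : (a * b * c).primeFactors.card ≤ 2) :
    ({a, b, c} : Multiset ℕ) = {1, 1, 2} ∨ ({a, b, c} : Multiset ℕ) = {1, 8, 9} ∨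
    ∃ n q : ℕ, 1 ≤ n ∧ q.Prime ∧ ({a, b, c} : Multiset ℕ) = {1, 2 ^ n, q} := by
  by_cases ha1 : a = 1
  · subst ha1
    exact aux_one_case b c hb h3 habc (by simpa using hω)
  by_cases hb1 : b = 1
  · subst hb1
    have hs : ({a, 1, c} : Multiset ℕ) = {1, a, c} := Multiset.cons_swap _ _ _
    rw [hs]
    exact aux_one_case a c ha h2 (by omega) (by simpa using hω)
  exfalso
  rw [(Nat.Coprime.mul_left h2 h3).primeFactors_mul,
    Finset.card_union_of_disjoint (Nat.Coprime.mul_left h2 h3).disjoint_primeFactors,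
    h1.primeFactors_mul, Finset.card_union_of_disjoint h1.disjoint_primeFactors] at hω
  have e1 := aux_card a (by omega)
  have e2 := aux_card b (by omega)
  have e3 := aux_card c (by omega)
  omega
end

section
/- Asymptotic Fermat's Last Theorem conditional on the Small Derivatives Conjecture: assume there is a constant 0 < η < 1 such that for all but finitely many triples of coprime positive integers (a,b,c) satisfying a + b = c and not, up to order, of the form (1, N, q) with q prime, there exists ψ ∈ 𝒯(a,b) such that a, b are ψ-independent and ‖ψ‖ < c^η. Then there is a positive integer n₀ such that for all n ≥ n₀ and all coprime positive integers a, b, c, one has aⁿ + bⁿ ≠ cⁿ. -/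
open Finset

lemma aux_pow (ψ : ℕ → ℤ) (a m : ℕ) :
    dpsi ψ ((a : ℤ) ^ (m+1)) = (m+1 : ℤ) * (a : ℤ) ^ m * dpsi ψ (a : ℤ) := by
  unfold dpsi
  rw [Int.natAbs_pow, Int.natAbs_natCast, Nat.primeFactors_pow _ (Nat.succ_ne_zero m),
    Finset.mul_sum]
  refine Finset.sum_congr rfl fun p hp => ?_
  have hd : (p : ℤ) ∣ (a : ℤ) := by exact_mod_cast Nat.dvd_of_mem_primeFactors hp
  rw [pow_succ, Int.mul_ediv_assoc _ hd, Nat.factorization_pow]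
  simp
  ring

lemma aux_le_norm (ψ : ℕ → ℤ) (h : IsDeriv ψ) (p : ℕ) : |(ψ p : ℝ)| ≤ dNorm ψ := by
  obtain ⟨_, B, hB⟩ := h
  refine le_ciSup (f := fun p : ℕ => |(ψ p : ℝ)|) ⟨(B : ℝ), ?_⟩ p
  rintro _ ⟨q, rfl⟩
  have := hB q
  simp only
  exact_mod_cast this

lemma aux_bound (ψ : ℕ → ℤ) (h : IsDeriv ψ) (a c : ℕ) (hac : a ≤ c) :
    |(dpsi ψ (a : ℤ) : ℝ)| ≤ (c : ℝ) ^ 3 * dNorm ψ := by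
  have hN : 0 ≤ dNorm ψ := (abs_nonneg _).trans (aux_le_norm ψ h 0)
  unfold dpsi
  rw [Int.natAbs_natCast]
  push_cast
  refine (Finset.abs_sum_le_sum_abs _ _).trans ?_
  have hcard : (a.primeFactors.card : ℝ) ≤ c := by
    have h1 : a.primeFactors ⊆ Finset.Icc 1 a := by
      intro p hp
      rw [Finset.mem_Icc]
      exact ⟨(Nat.prime_of_mem_primeFactors hp).one_lt.le, Nat.le_of_mem_primeFactors hp⟩
    have := Finset.card_le_card h1
    simp only [Nat.card_Icc] at this
    exact_mod_cast (by omega : a.primeFactors.card ≤ c)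
  have hterm : ∀ p ∈ a.primeFactors,
      |(((a : ℤ) / (p : ℤ) : ℤ) : ℝ) * (a.factorization p : ℝ) * (ψ p : ℝ)|
        ≤ (c : ℝ) * c * dNorm ψ := by
    intro p hp
    have ha : a ≠ 0 := by rintro rfl; simp at hp
    rw [abs_mul, abs_mul]
    have e1 : |(((a : ℤ) / (p : ℤ) : ℤ) : ℝ)| ≤ c := by
      have : ((a : ℤ) / (p : ℤ) : ℤ) = ((a / p : ℕ) : ℤ) := by push_cast; rfl
      rw [this, Int.cast_natCast, Nat.abs_cast]
      exact_mod_cast (Nat.div_le_self a p).trans hac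
    have e2 : |(a.factorization p : ℝ)| ≤ c := by
      rw [Nat.abs_cast]
      exact_mod_cast (Nat.factorization_lt p ha).le.trans hac
    have e3 := aux_le_norm ψ h p
    gcongr
  refine (Finset.sum_le_sum hterm).trans ?_
  rw [Finset.sum_const, nsmul_eq_mul]
  calc (a.primeFactors.card : ℝ) * ((c : ℝ) * c * dNorm ψ) ≤ c * ((c : ℝ) * c * dNorm ψ) := by
        gcongr
    _ = _ := by ring

lemma aux_dvd (a b c x y z n : ℤ) (m : ℕ) (hn : n ≠ 0) (hac : IsCoprime a c)
    (h : a ^ (m+1) + b ^ (m+1) = c ^ (m+1))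
    (hd : n * c ^ m * z = n * a ^ m * x + n * b ^ m * y) : c ^ m ∣ a * y - b * x := by
  have hd' : c ^ m * z = a ^ m * x + b ^ m * y := by
    apply mul_left_cancel₀ hn
    linear_combination hd
  have : c ^ m ∣ a ^ m * (a * y - b * x) := by
    refine ⟨c * y - b * z, ?_⟩
    linear_combination (-b) * hd' * (-1) + y * h
  exact (hac.symm.pow).dvd_of_dvd_mul_left this

/-- Asymptotic FLT conditional on the Small Derivatives Conjecture. -/
theorem asymptotic_flt_of_sdc (η : ℝ) (h0 : 0 < η) (h1 : η < 1) (hSDC : SDC η) :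
    ∃ n₀ : ℕ, 0 < n₀ ∧ ∀ n : ℕ, n₀ ≤ n → ∀ a b c : ℕ, 0 < a → 0 < b → 0 < c →
      Nat.Coprime a b → Nat.Coprime a c → Nat.Coprime b c →
      a ^ n + b ^ n ≠ c ^ n := by
  obtain ⟨M, hM⟩ := (hSDC.image (fun t : ℕ × ℕ × ℕ => t.2.2)).bddAbove
  obtain ⟨K, hK⟩ := exists_nat_gt (6 / (1 - η))
  refine ⟨M + K + 2, by omega, ?_⟩
  intro n hn a b c ha hb hc hab hac hbc heq
  have hc2 : 2 ≤ c := by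
    by_contra hcon
    have : c = 1 := by omega
    subst this
    have := Nat.pow_pos (n := n) ha
    have := Nat.pow_pos (n := n) hb
    simp at heq
    omega
  have hlt : M < c ^ n := by
    have := Nat.lt_pow_self (n := n) (show 1 < c by omega)
    omega
  have hnp : ∀ x : ℕ, ¬ (x ^ n).Prime := fun x => Nat.Prime.not_prime_pow (by omega)
  have hψ : ∃ ψ : ℕ → ℤ, MemT (a^n) (b^n) ψ ∧ Wpsi ψ ((a^n : ℕ) : ℤ) ((b^n : ℕ) : ℤ) ≠ 0 ∧
      dNorm ψ < ((c^n : ℕ) : ℝ) ^ η := by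
    by_contra hcon
    have hmem := hM (Set.mem_image_of_mem (fun t : ℕ × ℕ × ℕ => t.2.2)
      (show (a^n, b^n, c^n) ∈ _ from ⟨Nat.pow_pos ha, Nat.pow_pos hb, heq,
        Nat.Coprime.pow n n hab, ?_, hcon⟩))
    · simp only at hmem
      omega
    · rintro ⟨N, q, hq, hset⟩
      have : q ∈ ({a^n, b^n, c^n} : Multiset ℕ) := by
        simp only at hset
        rw [hset]; simp
      simp only [Multiset.insert_eq_cons, Multiset.mem_cons, Multiset.mem_singleton] at this
      rcases this with h | h | h <;> exact hnp _ (h ▸ hq)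
  obtain ⟨ψ, ⟨hD, -, hadd⟩, hW, hlt2⟩ := hψ
  obtain ⟨m, rfl⟩ : ∃ m, n = m + 1 := ⟨n - 1, by omega⟩
  have hZ : (a : ℤ) ^ (m+1) + (b : ℤ) ^ (m+1) = (c : ℤ) ^ (m+1) := by exact_mod_cast heq
  push_cast at hadd hW
  rw [hZ, aux_pow, aux_pow, aux_pow] at hadd
  have hdvd := aux_dvd a b c _ _ _ _ m (by positivity) (Nat.isCoprime_iff_coprime.2 hac) hZ hadd
  have hne : (a : ℤ) * dpsi ψ b - b * dpsi ψ a ≠ 0 := by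
    intro h
    apply hW
    unfold Wpsi
    rw [aux_pow, aux_pow]
    linear_combination ((m : ℤ) + 1) * a ^ m * b ^ m * h
  have hle := Int.le_of_dvd (abs_pos.2 hne) ((dvd_abs _ _).2 hdvd)
  have hleR : (c : ℝ) ^ m ≤ |(a : ℝ) * dpsi ψ b - b * dpsi ψ a| := by exact_mod_cast hle
  have hac' : a ≤ c := by
    refine (Nat.pow_le_pow_iff_left (Nat.succ_ne_zero m)).1 (by omega : a ^ (m+1) ≤ c ^ (m+1))
  have hbc' : b ≤ c := by
    refine (Nat.pow_le_pow_iff_left (Nat.succ_ne_zero m)).1 (by omega : b ^ (m+1) ≤ c ^ (m+1))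
  have hN : 0 ≤ dNorm ψ := (abs_nonneg _).trans (aux_le_norm ψ hD 0)
  have hcR : (2 : ℝ) ≤ c := by exact_mod_cast hc2
  have hacR : (a : ℝ) ≤ c := by exact_mod_cast hac'
  have hbcR : (b : ℝ) ≤ c := by exact_mod_cast hbc'
  have h5 : |(a : ℝ) * dpsi ψ b - b * dpsi ψ a| ≤ (c : ℝ) ^ 5 * dNorm ψ := by
    calc |(a : ℝ) * dpsi ψ b - b * dpsi ψ a| ≤ |(a : ℝ) * dpsi ψ b| + |(b : ℝ) * dpsi ψ a| :=
          abs_sub _ _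
      _ = (a : ℝ) * |(dpsi ψ b : ℝ)| + b * |(dpsi ψ a : ℝ)| := by
          rw [abs_mul, abs_mul, Nat.abs_cast, Nat.abs_cast]
      _ ≤ c * ((c : ℝ) ^ 3 * dNorm ψ) + c * ((c : ℝ) ^ 3 * dNorm ψ) := by
          have := aux_bound ψ hD b c hbc'
          have := aux_bound ψ hD a c hac'
          gcongr
      _ = 2 * ((c : ℝ) ^ 4 * dNorm ψ) := by ring
      _ ≤ c * ((c : ℝ) ^ 4 * dNorm ψ) := by gcongr
      _ = _ := by ring
  have hc0 : (0 : ℝ) < c := by linarith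
  have h6 : (c : ℝ) ^ m < (c : ℝ) ^ 5 * ((c ^ (m+1) : ℕ) : ℝ) ^ η :=
    (hleR.trans h5).trans_lt (by gcongr)
  have h7 : (c : ℝ) ^ (m : ℝ) < (c : ℝ) ^ (5 + ((m : ℝ) + 1) * η) := by
    rw [Real.rpow_add hc0, Real.rpow_mul hc0.le, Real.rpow_natCast]
    have e : (c : ℝ) ^ ((m : ℝ) + 1) = ((c ^ (m+1) : ℕ) : ℝ) := by
      push_cast
      rw [← Real.rpow_natCast]
      push_cast
      rfl
    rw [e]
    exact_mod_cast h6
  have h8 := (Real.rpow_lt_rpow_left_iff (by linarith)).1 h7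
  have hKm : (K : ℝ) ≤ m + 1 := by exact_mod_cast (by omega : K ≤ m + 1)
  have h9 := hK.trans_le hKm
  rw [div_lt_iff₀ (by linarith)] at h9
  nlinarith
end

section
/- The Small Derivatives Conjecture implies Oesterlé's abc Conjecture: let 0 < η < 1 and assume that for all but finitely many triples of coprime positive integers (a,b,c) satisfying a + b = c and not, up to order, of the form (1, N, q) with q prime, there exists ψ ∈ 𝒯(a,b) such that a, b are ψ-independent and ‖ψ‖ < c^η. Then for every M > 1/(1 − η) there are at most finitely many triples of coprime positive integers a, b, c with a + b = c and c ≥ rad(abc)^M; equivalently, Oesterlé's abc Conjecture holds for every exponent M > 1/(1 − η) up to adjusting for finitely many exceptions. -/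
open Finset

lemma aux_dvd_s13 (ψ : ℕ → ℤ) (a n : ℕ) (hn : n ≠ 0) (han : a ∣ n) :
    (a : ℤ) ∣ (radN n : ℤ) * dpsi ψ (a : ℤ) := by
  unfold dpsi
  rw [Finset.mul_sum]
  refine Finset.dvd_sum fun p hp => ?_
  simp only [Int.natAbs_natCast] at hp ⊢
  have hpa : p ∣ a := Nat.dvd_of_mem_primeFactors hp
  have hpn : p ∈ n.primeFactors := Nat.primeFactors_mono han hn hp
  have hpr : p ∣ radN n := Finset.dvd_prod_of_mem (fun p => p) hpn
  obtain ⟨k, hk⟩ := hpr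
  obtain ⟨m, hm⟩ := hpa
  have hp0 : (p : ℤ) ≠ 0 := by exact_mod_cast (Nat.prime_of_mem_primeFactors hp).ne_zero
  have : (a : ℤ) / (p : ℤ) = m := by
    rw [hm]; push_cast; exact Int.mul_ediv_cancel_left _ hp0
  rw [this, hk]
  refine ⟨k * (a.factorization p : ℤ) * ψ p, ?_⟩
  nth_rewrite 2 [hm]
  push_cast
  ring

lemma aux_omega (n : ℕ) (hn : 0 < n) :
    (∑ p ∈ n.primeFactors, (n.factorization p : ℝ)) ≤ 2 * Real.log n := by
  have h1 : 2 ^ (∑ p ∈ n.primeFactors, n.factorization p) ≤ n := by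
    conv_rhs => rw [← Nat.prod_factorization_pow_eq_self hn.ne']
    rw [← Finset.prod_pow_eq_pow_sum]
    exact Finset.prod_le_prod' fun p hp =>
      Nat.pow_le_pow_left (Nat.prime_of_mem_primeFactors hp).two_le _
  have h2 : ((2 : ℝ) ^ (∑ p ∈ n.primeFactors, n.factorization p)) ≤ n := by exact_mod_cast h1
  have h3 := Real.log_le_log (by positivity) h2
  rw [Real.log_pow] at h3
  push_cast at h3
  have h4 : (0 : ℝ) ≤ ∑ p ∈ n.primeFactors, (n.factorization p : ℝ) := by positivity
  nlinarith [Real.log_two_gt_d9]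

lemma aux_bound_s13 (ψ : ℕ → ℤ) (K : ℝ) (hK : ∀ p, |(ψ p : ℝ)| ≤ K) (n : ℕ) (hn : 0 < n) :
    |(dpsi ψ (n : ℤ) : ℝ)| ≤ n * K * (2 * Real.log n) := by
  have hK0 : 0 ≤ K := (abs_nonneg _).trans (hK 0)
  unfold dpsi
  simp only [Int.natAbs_natCast]
  push_cast
  refine (Finset.abs_sum_le_sum_abs _ _).trans ?_
  calc _ ≤ ∑ p ∈ n.primeFactors, (n * K) * (n.factorization p : ℝ) := by
        refine Finset.sum_le_sum fun p hp => ?_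
        rw [abs_mul, abs_mul, Nat.abs_cast]
        have e : |(((n : ℤ) / (p : ℤ) : ℤ) : ℝ)| ≤ n := by
          have : ((n : ℤ) / (p : ℤ)) = ((n / p : ℕ) : ℤ) := by push_cast; rfl
          rw [this, Int.cast_natCast, Nat.abs_cast]
          exact_mod_cast Nat.div_le_self n p
        calc _ ≤ (n : ℝ) * (n.factorization p : ℝ) * K := by
              gcongr
              exact hK p
          _ = _ := by ring
    _ = (n * K) * ∑ p ∈ n.primeFactors, (n.factorization p : ℝ) := by rw [Finset.mul_sum]
    _ ≤ _ := by
      gcongr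
      exact aux_omega n hn

lemma aux_main_s13 (ψ : ℕ → ℤ) (a b : ℕ) (ha : 0 < a) (hb : 0 < b) (hab : Nat.Coprime a b)
    (hT : MemT a b ψ) (hW : Wpsi ψ (a : ℤ) (b : ℤ) ≠ 0) :
    ((a + b : ℕ) : ℝ) ≤ radN (a * b * (a + b)) * dNorm ψ * (4 * Real.log ((a + b : ℕ) : ℝ)) := by
  obtain ⟨⟨_, B, hB⟩, _, hd⟩ := hT
  have hn : a * b * (a + b) ≠ 0 := by positivity
  set R := radN (a * b * (a + b)) with hR
  have hK : ∀ p, |(ψ p : ℝ)| ≤ dNorm ψ := by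
    intro p
    unfold dNorm
    refine le_ciSup (f := fun p => |(ψ p : ℝ)|) ⟨(B : ℝ), ?_⟩ p
    rintro _ ⟨q, rfl⟩
    show |(ψ q : ℝ)| ≤ (B : ℝ)
    exact_mod_cast hB q
  have d1 := aux_dvd_s13 ψ a _ hn (Dvd.intro _ (by ring : a * (b * (a + b)) = _))
  have d2 := aux_dvd_s13 ψ b _ hn (Dvd.intro _ (by ring : b * (a * (a + b)) = _))
  have d3 := aux_dvd_s13 ψ (a + b) _ hn (Dvd.intro_left _ rfl)
  rw [← hR] at d1 d2 d3
  push_cast at d3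
  rw [hd] at d3
  have w1 : (a : ℤ) ∣ R * Wpsi ψ a b := by
    obtain ⟨k, hk⟩ := d1
    refine ⟨R * dpsi ψ b - b * k, ?_⟩
    unfold Wpsi
    linear_combination (-(b : ℤ)) * hk
  have w2 : (b : ℤ) ∣ R * Wpsi ψ a b := by
    obtain ⟨k, hk⟩ := d2
    refine ⟨a * k - R * dpsi ψ a, ?_⟩
    unfold Wpsi
    linear_combination (a : ℤ) * hk
  have w3 : ((a + b : ℕ) : ℤ) ∣ R * Wpsi ψ a b := by
    obtain ⟨k, hk⟩ := d3
    refine ⟨a * k - R * dpsi ψ a, ?_⟩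
    unfold Wpsi
    push_cast
    linear_combination (a : ℤ) * hk
  rw [Int.natCast_dvd] at w1 w2 w3
  have c1 : Nat.Coprime a (a + b) := by simpa using hab
  have c2 : Nat.Coprime b (a + b) := by simpa using hab.symm
  have w : a * b * (a + b) ∣ (R * Wpsi ψ a b).natAbs :=
    Nat.Coprime.mul_dvd_of_dvd_of_dvd (Nat.Coprime.mul_left c1 c2)
      (Nat.Coprime.mul_dvd_of_dvd_of_dvd hab w1 w2) w3
  have hR0 : 0 < R := Finset.prod_pos fun p hp => (Nat.prime_of_mem_primeFactors hp).pos
  have hle := Nat.le_of_dvd (Int.natAbs_pos.mpr (mul_ne_zero (by exact_mod_cast hR0.ne') hW)) w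
  rw [Int.natAbs_mul, Int.natAbs_natCast] at hle
  have hle' : (a : ℝ) * b * (a + b : ℕ) ≤ R * |(Wpsi ψ a b : ℝ)| := by
    have : ((a * b * (a + b) : ℕ) : ℝ) ≤ ((R * (Wpsi ψ a b).natAbs : ℕ) : ℝ) := by
      exact_mod_cast hle
    rw [Nat.cast_mul, Nat.cast_mul, Nat.cast_mul, Nat.cast_natAbs] at this
    simpa using this
  have hK0 : 0 ≤ dNorm ψ := (abs_nonneg _).trans (hK 0)
  have l1 : Real.log a ≤ Real.log ((a + b : ℕ) : ℝ) :=
    Real.log_le_log (by exact_mod_cast ha) (by exact_mod_cast Nat.le_add_right a b)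
  have l2 : Real.log b ≤ Real.log ((a + b : ℕ) : ℝ) :=
    Real.log_le_log (by exact_mod_cast hb) (by exact_mod_cast Nat.le_add_left b a)
  have e1 := aux_bound_s13 ψ _ hK a ha
  have e2 := aux_bound_s13 ψ _ hK b hb
  have hWb : |(Wpsi ψ a b : ℝ)| ≤
      (a * b) * (dNorm ψ * (4 * Real.log ((a + b : ℕ) : ℝ))) := by
    unfold Wpsi
    rw [Int.cast_sub, Int.cast_mul, Int.cast_mul, Int.cast_natCast, Int.cast_natCast]
    refine (abs_sub _ _).trans ?_
    rw [abs_mul, abs_mul, Nat.abs_cast, Nat.abs_cast]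
    calc _ ≤ (a : ℝ) * (b * dNorm ψ * (2 * Real.log ((a + b : ℕ) : ℝ)))
          + b * (a * dNorm ψ * (2 * Real.log ((a + b : ℕ) : ℝ))) := by
          gcongr
          · exact e2.trans (by gcongr)
          · exact e1.trans (by gcongr)
      _ = _ := by ring
  have hpos : (0 : ℝ) < a * b := by positivity
  have : (a : ℝ) * b * (a + b : ℕ) ≤
      (a * b) * (R * dNorm ψ * (4 * Real.log ((a + b : ℕ) : ℝ))) := by
    refine hle'.trans ?_
    calc _ ≤ (R : ℝ) * ((a * b) * (dNorm ψ * (4 * Real.log ((a + b : ℕ) : ℝ)))) := by gcongr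
      _ = _ := by ring
  exact le_of_mul_le_mul_left this hpos

lemma aux_two (n p q : ℕ) (hn : n ≠ 0) (hp : p.Prime) (hq : q.Prime) (hpq : p ≠ q)
    (h1 : p ∣ n) (h2 : q ∣ n) : p * q ≤ radN n := by
  rw [← Finset.prod_pair (f := fun x : ℕ => x) hpq]
  refine Finset.prod_le_prod_of_subset_of_one_le' ?_ ?_
  · intro x hx
    simp only [Finset.mem_insert, Finset.mem_singleton] at hx
    rcases hx with rfl | rfl
    · exact Nat.mem_primeFactors.mpr ⟨hp, h1, hn⟩
    · exact Nat.mem_primeFactors.mpr ⟨hq, h2, hn⟩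
  · intro i hi _
    exact (Nat.prime_of_mem_primeFactors hi).one_lt.le

lemma aux_succ (n q : ℕ) (hn : n ≠ 0) (hq : q.Prime) (h1 : q ∣ n) (h2 : q + 1 ∣ n) :
    q + 1 ≤ radN n := by
  have hm : (q + 1).minFac.Prime := Nat.minFac_prime (by have := hq.two_le; omega)
  have hd := Nat.minFac_dvd (q + 1)
  have hne : (q + 1).minFac ≠ q := by
    intro h
    rw [h] at hd
    have := (Nat.dvd_add_right (dvd_refl q)).mp hd
    exact hq.one_lt.ne' (Nat.dvd_one.mp this)
  have := aux_two n _ q hn hm hq hne (hd.trans h2) h1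
  nlinarith [hm.two_le, hq.two_le]

lemma aux_exc (a b N q : ℕ) (ha : 0 < a) (hb : 0 < b) (hq : q.Prime)
    (h : ({a, b, a + b} : Multiset ℕ) = {1, N, q}) : a + b ≤ radN (a * b * (a + b)) := by
  have hn : a * b * (a + b) ≠ 0 := by positivity
  have m1 : q ∈ ({a, b, a + b} : Multiset ℕ) := by rw [h]; simp
  have m2 : 1 ∈ ({a, b, a + b} : Multiset ℕ) := by rw [h]; simp
  simp only [Multiset.insert_eq_cons, Multiset.mem_cons, Multiset.mem_singleton] at m1 m2
  have h2 := hq.two_le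
  by_cases hc : q = a + b
  · have : q ∈ (a * b * (a + b)).primeFactors :=
      Nat.mem_primeFactors.mpr ⟨hq, hc ▸ Dvd.intro_left _ rfl, hn⟩
    rw [← hc] at this ⊢
    have hd : q ∣ radN (a * b * q) := Finset.dvd_prod_of_mem (fun p => p) this
    exact Nat.le_of_dvd
      (Finset.prod_pos fun p hp => (Nat.prime_of_mem_primeFactors hp).pos) hd
  · have : (q = a ∧ b = 1) ∨ (q = b ∧ a = 1) := by omega
    rcases this with ⟨rfl, rfl⟩ | ⟨rfl, rfl⟩
    · exact aux_succ _ q hn hq (Dvd.intro _ (by ring : q * (1 * (q + 1)) = _))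
        (Dvd.intro_left _ rfl)
    · rw [add_comm 1 q] at hn ⊢
      exact aux_succ _ q hn hq (Dvd.intro _ (by ring : q * (1 * (q + 1)) = _))
        (Dvd.intro_left _ rfl)

/-- The Small Derivatives Conjecture implies Oesterlé's abc Conjecture. -/
theorem oesterle_abc_of_sdc (η : ℝ) (h0 : 0 < η) (h1 : η < 1) (hSDC : SDC η)
    (M : ℝ) (hM : 1 / (1 - η) < M) :
    {t : ℕ × ℕ × ℕ | 0 < t.1 ∧ 0 < t.2.1 ∧ t.1 + t.2.1 = t.2.2 ∧
      Nat.Coprime t.1 t.2.1 ∧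
      (radN (t.1 * t.2.1 * t.2.2) : ℝ) ^ M ≤ (t.2.2 : ℝ)}.Finite := by
  have hη : 0 < 1 - η := by linarith
  have hM1 : 1 < M := by
    refine lt_of_le_of_lt ?_ hM
    rw [le_div_iff₀ hη]; linarith
  have hM0 : 0 < M := by linarith
  have hε : 0 < 1 - η - M⁻¹ := by
    have : M⁻¹ < 1 - η := by
      rw [one_div] at hM
      exact inv_lt_of_inv_lt₀ hη hM
    linarith
  have hlo := (isLittleO_log_rpow_atTop hε).def (show (0 : ℝ) < 1 / 8 by norm_num)
  obtain ⟨X, hX⟩ := Filter.eventually_atTop.mp hlo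
  set C := ⌈X⌉₊ with hC
  refine Set.Finite.subset (hSDC.union
    (((Set.finite_Iic C).prod ((Set.finite_Iic C).prod (Set.finite_Iic C))))) ?_
  rintro ⟨a, b, c⟩ ⟨ha, hb, hc, hab, hr⟩
  dsimp only at ha hb hc hab hr
  subst hc
  by_contra hnot
  rw [Set.mem_union, not_or] at hnot
  obtain ⟨hn1, hn2⟩ := hnot
  have hbig : C < a + b := by
    by_contra hle
    apply hn2
    simp only [Set.mem_prod, Set.mem_Iic]
    omega
  have hcX : X ≤ ((a + b : ℕ) : ℝ) :=
    (Nat.le_ceil X).trans (by exact_mod_cast hbig.le)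
  have hc1 : (1 : ℝ) < ((a + b : ℕ) : ℝ) := by exact_mod_cast (by omega : 1 < a + b)
  have hc0 : (0 : ℝ) < ((a + b : ℕ) : ℝ) := by linarith
  by_cases hex : ∃ N q : ℕ, q.Prime ∧ ({a, b, a + b} : Multiset ℕ) = {1, N, q}
  · obtain ⟨N, q, hq, hm⟩ := hex
    have h := aux_exc a b N q ha hb hq hm
    have h' : ((a + b : ℕ) : ℝ) ≤ radN (a * b * (a + b)) := by exact_mod_cast h
    have h2 := Real.rpow_le_rpow hc0.le h' hM0.le
    have h3 := Real.rpow_lt_rpow_of_exponent_lt hc1 hM1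
    rw [Real.rpow_one] at h3
    linarith
  · have hψ : ∃ ψ : ℕ → ℤ, MemT a b ψ ∧ Wpsi ψ (a : ℤ) (b : ℤ) ≠ 0 ∧
        dNorm ψ < ((a + b : ℕ) : ℝ) ^ η := by
      by_contra hno
      exact hn1 ⟨ha, hb, rfl, hab, hex, hno⟩
    obtain ⟨ψ, hT, hW, hN⟩ := hψ
    have key := aux_main_s13 ψ a b ha hb hab hT hW
    have hl := hX _ hcX
    generalize ((a + b : ℕ) : ℝ) = c at *
    have hlog : 0 < Real.log c := Real.log_pos hc1
    have hpε : 0 < c ^ (1 - η - M⁻¹) := Real.rpow_pos_of_pos hc0 _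
    rw [Real.norm_of_nonneg hlog.le, Real.norm_of_nonneg hpε.le] at hl
    have hR : (radN (a * b * (a + b)) : ℝ) ≤ c ^ M⁻¹ := by
      have := Real.rpow_le_rpow (by positivity) hr (inv_nonneg.mpr hM0.le)
      rwa [Real.rpow_rpow_inv (by positivity) hM0.ne'] at this
    have hNn : 0 ≤ dNorm ψ := Real.iSup_nonneg fun p => abs_nonneg _
    have h5 : c ≤ c ^ M⁻¹ * c ^ η * (4 * (1 / 8 * c ^ (1 - η - M⁻¹))) := by
      refine key.trans ?_
      gcongr
    have h6 : c ^ M⁻¹ * c ^ η * c ^ (1 - η - M⁻¹) = c := by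
      rw [← Real.rpow_add hc0, ← Real.rpow_add hc0]
      conv_rhs => rw [← Real.rpow_one c]
      congr 1; ring
    have h7 : c ^ M⁻¹ * c ^ η * (4 * (1 / 8 * c ^ (1 - η - M⁻¹))) = c / 2 := by
      linear_combination (1 / 2) * h6
    linarith
end

section
/- Let K be a field and m < n positive integers. Let v₁, …, v_m ∈ Kⁿ be vectors that are linearly independent over K, with coordinates v_i = (v_{i,1}, …, v_{i,n}). Let j₀ ∈ {1, …, n} be an index such that v_{i,j₀} ≠ 0 for some i. Then there is an injective function τ : {1, …, m} → {1, …, n} such that j₀ lies in the image of τ and v_{i,τ(i)} ≠ 0 for each 1 ≤ i ≤ m. -/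
open Finset

/-- Selection of nonzero entries along an injection, covering a prescribed column. -/
theorem exists_injective_nonzero_selection (K : Type*) [Field K] (m n : ℕ)
    (hm : 0 < m) (hmn : m < n) (v : Fin m → Fin n → K)
    (hv : LinearIndependent K v) (j₀ : Fin n) (hj : ∃ i, v i j₀ ≠ 0) :
    ∃ τ : Fin m → Fin n, Function.Injective τ ∧ (∃ i, τ i = j₀) ∧
      ∀ i, v i (τ i) ≠ 0 := by
  classical
  let A : Matrix (Fin m) (Fin n) K := Matrix.of v
  have hrank : A.rank = m := by
    have := LinearIndependent.rank_matrix (M := A) hv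
    simpa using this
  have hspan : Submodule.span K (Set.range A.col) = ⊤ := by
    apply Submodule.eq_top_of_finrank_eq
    rw [← Matrix.rank_eq_finrank_span_cols, hrank]
    simp
  have h0 : LinearIndepOn K A.col {j₀} := by
    obtain ⟨i, hi⟩ := hj
    refine LinearIndepOn.singleton fun h => hi ?_
    exact congrFun h i
  obtain ⟨b, -, hsb, hb, hli⟩ := exists_linearIndepOn_extension h0 (Set.subset_univ _)
  have htop : ⊤ ≤ Submodule.span K (Set.range (fun x : b => A.col x)) := by
    rw [← hspan, Submodule.span_le, ← Set.image_univ]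
    rwa [Set.image_eq_range A.col b] at hb
  let B := Module.Basis.mk hli htop
  have hcard : Fintype.card b = Fintype.card (Fin m) := by
    rw [← Module.finrank_eq_card_basis B]
    simp
  let e : Fin m ≃ b := (Fintype.equivOfCardEq hcard).symm
  let M : Matrix (Fin m) (Fin m) K := Matrix.of fun i k => v i (e k)
  have hM : IsUnit M := by
    rw [← Matrix.linearIndependent_cols_iff_isUnit]
    exact hli.comp e e.injective
  have hdet : M.det ≠ 0 := ((Matrix.isUnit_iff_isUnit_det M).1 hM).ne_zero
  rw [Matrix.det_apply'] at hdet
  obtain ⟨σ, -, hσ⟩ := Finset.exists_ne_zero_of_sum_ne_zero hdet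
  have hp := Finset.prod_ne_zero_iff.1 (right_ne_zero_of_mul hσ)
  refine ⟨fun i => e (σ.symm i), ?_, ?_, ?_⟩
  · exact Subtype.val_injective.comp (e.injective.comp σ.symm.injective)
  · exact ⟨σ (e.symm ⟨j₀, hsb rfl⟩), by simp⟩
  · intro i
    have := hp (σ.symm i) (Finset.mem_univ _)
    simpa [M] using this
end
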